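/- Let B := {z ∈ ℍ : ‖z‖ < 1} be the open unit ball of ℍ. Suppose g : B → B is a bijection of B onto itself, is real-analytic on B (as a map of ℝ⁴), is pseudoconformal at every point of B, and satisfies g(0) = 0. Then there exist quaternions u, v with ‖u‖ = ‖v‖ = 1 such that g(z) = u * z * v for all z ∈ B. (The stabilizer-of-the-origin step in the paper's Theorem 3.37, for one quaternion variable.) -/

import Mathlib

open scoped Quaternion

/-- `f` is pseudoconformal at `ξ`: it is Fréchet differentiable over `ℝ` at `ξ` and
its derivative has the form `h ↦ a * h * b` with nonzero quaternions `a`, `b`. -/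
def Pseudoconformal (f : ℍ[ℝ] → ℍ[ℝ]) (ξ : ℍ[ℝ]) : Prop :=
  ∃ (A : ℍ[ℝ] →L[ℝ] ℍ[ℝ]) (a b : ℍ[ℝ]), a ≠ 0 ∧ b ≠ 0 ∧
    HasFDerivAt f A ξ ∧ ∀ h : ℍ[ℝ], A h = a * h * b

/-!
Liouville's argument. Let `f` be conformal with `‖Df h‖ = ρ⁻¹ ‖h‖`. Differentiating
`ρ² ⟪Df h, Df k⟫ = ⟪h, k⟫` determines `D²f` from `Df` and `∇ρ`. One more derivative, the symmetry of
`D³f` and a third direction orthogonal to two given ones force `D(∇ρ) = ‖∇ρ‖² / (2ρ) • id`. This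
makes the second derivatives of `ρ` and of `ρ f` constant multiples of the inner product, so that up
to a translation and the linear map `Df(x₀)`, `f` is the conjugate by the inversion of a translation
by some `-d`. If such a map fixes `0` and takes the unit ball onto itself, comparing the two balls
along the line through `d` gives `d = 0` and `‖Df(0) h‖ = ‖h‖`.
-/

section Liouville

open Set Metric Function
open scoped InnerProductSpace Gradient

variable {E F G : Type*} [NormedAddCommGroup E] [InnerProductSpace ℝ E]
  [NormedAddCommGroup F] [InnerProductSpace ℝ F] [NormedAddCommGroup G] [NormedSpace ℝ G]

theorem exists_norm_eq_one_inner_eq_zero_pair (hE : 2 < Module.rank ℝ E) (u v : E) :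
    ∃ w : E, ‖w‖ = 1 ∧ ⟪u, w⟫_ℝ = 0 ∧ ⟪v, w⟫_ℝ = 0 := by
  classical
  have hrank : Module.rank ℝ (Submodule.span ℝ (({u, v} : Finset E) : Set E)) ≤ 2 :=
    (rank_span_finset_le _).trans (by exact_mod_cast Finset.card_le_two)
  have hne : (Submodule.span ℝ (({u, v} : Finset E) : Set E))ᗮ ≠ ⊥ := by
    rw [Ne, Submodule.orthogonal_eq_bot_iff]
    intro htop
    rw [htop, rank_top] at hrank
    exact hE.not_ge hrank
  obtain ⟨w, hw, hw0⟩ := Submodule.exists_mem_ne_zero_of_ne_bot hne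
  refine ⟨‖w‖⁻¹ • w, norm_smul_inv_norm hw0, ?_, ?_⟩ <;>
    rw [inner_smul_right, hw _ (Submodule.subset_span (by simp)), mul_zero]

/-- `p ↦ ⟪p, h⟫ k + ⟪p, k⟫ h - ⟪h, k⟫ p`. With `p = ∇ρ`, the Christoffel symbols of the metric
`ρ⁻² ⟪·, ·⟫` are `-ρ⁻¹` times this vector. -/
noncomputable def conformalChristoffel (h k : E) : E →L[ℝ] E :=
  (innerSL ℝ h).smulRight k + (innerSL ℝ k).smulRight h - ⟪h, k⟫_ℝ • ContinuousLinearMap.id ℝ E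

theorem conformalChristoffel_apply (h k p : E) :
    conformalChristoffel h k p = ⟪p, h⟫_ℝ • k + ⟪p, k⟫_ℝ • h - ⟪h, k⟫_ℝ • p := by
  simp [conformalChristoffel, real_inner_comm]

theorem conformalChristoffel_self_right (h p : E) :
    conformalChristoffel h p p = ‖p‖ ^ 2 • h := by
  rw [conformalChristoffel_apply, real_inner_self_eq_norm_sq, real_inner_comm p h]
  module

theorem conformalChristoffel_curvature (l h k p : E) :
    (⟪p, l⟫_ℝ • conformalChristoffel h k p +
        conformalChristoffel l (conformalChristoffel h k p) p) -
      (⟪p, h⟫_ℝ • conformalChristoffel l k p +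
        conformalChristoffel h (conformalChristoffel l k p) p) =
      (2⁻¹ * ‖p‖ ^ 2) • (conformalChristoffel h k l - conformalChristoffel l k h) := by
  simp only [conformalChristoffel_apply, inner_add_right, inner_sub_right, real_inner_smul_right,
    ← real_inner_self_eq_norm_sq]
  simp only [real_inner_comm]
  module

theorem eq_zero_of_conformalChristoffel_symm (hE : 2 < Module.rank ℝ E) {e : E →ₗ[ℝ] E}
    (he : ∀ l h k, conformalChristoffel h k (e l) = conformalChristoffel l k (e h)) : e = 0 := by
  simp only [conformalChristoffel_apply] at he
  have inner_apply_eq_zero {l h : E} (hlh : ⟪l, h⟫_ℝ = 0) : ⟪e l, h⟫_ℝ = 0 := by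
    obtain ⟨k, hk, hlk, hhk⟩ := exists_norm_eq_one_inner_eq_zero_pair hE l h
    have hinner := congrArg (⟪·, k⟫_ℝ) (he l k h)
    simpa [inner_add_left, inner_sub_left, inner_smul_left, real_inner_comm, hk, hlk, hhk, hlh]
      using hinner
  have apply_eq {l h : E} (hh : ‖h‖ = 1) (hlh : ⟪l, h⟫_ℝ = 0) : e l = -⟪e h, h⟫_ℝ • l := by
    have := he l h h
    have hhl := inner_apply_eq_zero ((real_inner_comm l h).trans hlh)
    rw [inner_apply_eq_zero hlh, hlh, hhl, real_inner_self_eq_norm_sq, hh] at this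
    simp only [zero_smul, add_zero, one_pow, one_smul, zero_sub, zero_add, sub_zero] at this
    rw [neg_smul, ← this, neg_neg]
  ext l
  obtain ⟨h, hh, hlh, -⟩ := exists_norm_eq_one_inner_eq_zero_pair hE l l
  obtain ⟨k, hk, hlk, hhk⟩ := exists_norm_eq_one_inner_eq_zero_pair hE l h
  have inner_apply_self : ⟪e h, h⟫_ℝ = -⟪e k, k⟫_ℝ := by
    rw [apply_eq hk hhk, inner_smul_left, real_inner_self_eq_norm_sq, hh]; simp
  have apply_eq_neg : e l = -e l := by
    nth_rw 1 [apply_eq hh hlh]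
    rw [apply_eq hk hlk, inner_apply_self, neg_smul, neg_smul]
  have := IsAddTorsionFree.of_isTorsionFree ℝ E
  exact self_eq_neg.1 apply_eq_neg

theorem eq_add_half_norm_sq_smul {U : Set E} (hUo : IsOpen U) (hUc : IsPreconnected U)
    {φ : E → G} {φ' : E → E →L[ℝ] G} {κ : G} (hφ : ∀ x ∈ U, HasFDerivAt φ (φ' x) x)
    (hφ' : ∀ x ∈ U, ∀ k, HasFDerivAt (fun y => φ' y k) ((innerSL ℝ k).smulRight κ) x)
    {x₀ x : E} (hx₀ : x₀ ∈ U) (hx : x ∈ U) :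
    φ x = φ x₀ + φ' x₀ (x - x₀) + (2⁻¹ * ‖x - x₀‖ ^ 2) • κ := by
  have first_order {y : E} (hy : y ∈ U) (k : E) : φ' y k = φ' x₀ k + ⟪k, y - x₀⟫_ℝ • κ := by
    have hlin (z : E) : HasFDerivAt (fun z => φ' x₀ k + ⟪k, z - x₀⟫_ℝ • κ)
        ((innerSL ℝ k).smulRight κ) z :=
      (((innerSL ℝ k).hasFDerivAt.comp z ((hasFDerivAt_id z).sub_const x₀)).smul_const κ).const_add
        (φ' x₀ k)
    exact hUo.eqOn_of_fderiv_eq hUc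
      (fun z hz => (hφ' z hz k).differentiableAt.differentiableWithinAt)
      (fun z _ => (hlin z).differentiableAt.differentiableWithinAt)
      (fun z hz => (hφ' z hz k).fderiv.trans (hlin z).fderiv.symm) hx₀ (by simp) hy
  have hquad (z : E) : HasFDerivAt
      (fun z => φ x₀ + φ' x₀ (z - x₀) + (2⁻¹ * ‖z - x₀‖ ^ 2) • κ)
      (φ' x₀ + (innerSL ℝ (z - x₀)).smulRight κ) z := by
    have hsub := (hasFDerivAt_id (𝕜 := ℝ) z).sub_const x₀
    refine ((((φ' x₀).hasFDerivAt.comp z hsub).const_add (φ x₀)).add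
      ((hsub.norm_sq.const_mul 2⁻¹).smul_const κ)).congr_fderiv ?_
    ext h
    simp
  refine hUo.eqOn_of_fderiv_eq hUc (fun z hz => (hφ z hz).differentiableAt.differentiableWithinAt)
    (fun z _ => (hquad z).differentiableAt.differentiableWithinAt) (fun z hz => ?_) hx₀ (by simp) hx
  rw [(hφ z hz).fderiv, (hquad z).fderiv]
  ext k
  simp [first_order hz k, inner_sub_right, real_inner_comm k]

section Mobius

/-- The denominator of `mobius d`: the product `‖x‖² ‖‖x‖⁻² x - d‖²`, expanded so that it has the
right value `1` at `x = 0`. -/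
noncomputable def mobiusDenom (d x : E) : ℝ :=
  1 - 2 * ⟪d, x⟫_ℝ + ‖d‖ ^ 2 * ‖x‖ ^ 2

/-- The conjugate of the translation by `-d` under the inversion `x ↦ ‖x‖⁻² x`. It is a Möbius map
fixing `0` with derivative the identity there; its pole, the zero of `mobiusDenom d`, gets the junk
value `0`. -/
noncomputable def mobius (d x : E) : E :=
  (mobiusDenom d x)⁻¹ • (x - ‖x‖ ^ 2 • d)

theorem norm_mobius_sq {d x : E} (hx : mobiusDenom d x ≠ 0) :
    ‖mobius d x‖ ^ 2 = ‖x‖ ^ 2 / mobiusDenom d x := by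
  have hnum : ‖x - ‖x‖ ^ 2 • d‖ ^ 2 = ‖x‖ ^ 2 * mobiusDenom d x := by
    rw [norm_sub_sq_real, norm_smul, real_inner_smul_right, real_inner_comm, mobiusDenom]
    simp only [norm_pow, norm_norm]
    ring
  rw [mobius, norm_smul, mul_pow, hnum, norm_inv, Real.norm_eq_abs, inv_pow, sq_abs]
  field_simp

theorem mobiusDenom_neg_mobius {d x : E} (hx : mobiusDenom d x ≠ 0) :
    mobiusDenom (-d) (mobius d x) = (mobiusDenom d x)⁻¹ := by
  have hinner : ⟪d, mobius d x⟫_ℝ = (⟪d, x⟫_ℝ - ‖d‖ ^ 2 * ‖x‖ ^ 2) / mobiusDenom d x := by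
    rw [mobius, real_inner_smul_right, inner_sub_right, real_inner_smul_right,
      real_inner_self_eq_norm_sq]
    ring
  rw [mobiusDenom, norm_neg, norm_mobius_sq hx, inner_neg_left, hinner]
  field_simp
  rw [mobiusDenom]
  ring

theorem mobius_zero_left (x : E) : mobius 0 x = x := by
  simp [mobius, mobiusDenom]

theorem mobiusDenom_smul_smul {u : E} (hu : ‖u‖ = 1) (k r : ℝ) :
    mobiusDenom (k • u) (r • u) = (1 - k * r) ^ 2 := by
  simp only [mobiusDenom, real_inner_smul_left, real_inner_smul_right, real_inner_self_eq_norm_sq,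
    norm_smul, hu, Real.norm_eq_abs, mul_one, sq_abs]
  ring

theorem eq_zero_and_eq_one_of_lt_mobiusDenom [Nontrivial E] {d : E} {m : ℝ} (hm : 0 < m)
    (hin : ∀ x, ‖x‖ < 1 → (m * ‖x‖) ^ 2 < mobiusDenom d x)
    (hout : ∀ w, m * ‖w‖ < 1 → ‖w‖ ^ 2 < mobiusDenom (-d) w) : d = 0 ∧ m = 1 := by
  obtain ⟨u, hu, hd⟩ : ∃ u : E, ‖u‖ = 1 ∧ ‖d‖ • u = d := by
    rcases eq_or_ne d 0 with rfl | hd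
    · obtain ⟨u, hu⟩ := exists_norm_eq E zero_le_one
      exact ⟨u, hu, by simp⟩
    · exact ⟨‖d‖⁻¹ • d, norm_smul_inv_norm hd, smul_inv_smul₀ (norm_ne_zero_iff.2 hd) d⟩
  have hk := norm_nonneg d
  have hsum : m + ‖d‖ ≤ 1 := by
    by_contra! hlt
    -- `m • mobius d` takes the point `(m + ‖d‖)⁻¹ • u` to the unit sphere
    have hlt := hin ((m + ‖d‖)⁻¹ • u) (by
      simpa [norm_smul, hu, abs_of_pos (zero_lt_one.trans hlt)] using inv_lt_one_of_one_lt₀ hlt)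
    rw [← hd, mobiusDenom_smul_smul hu, hd, norm_smul, hu, norm_inv, Real.norm_eq_abs,
      abs_of_pos (by positivity)] at hlt
    refine hlt.ne ?_
    field_simp
    ring
  have hm1 : 1 ≤ m := by
    by_contra! hlt
    have hlt := hout ((-1 : ℝ) • u) (by simpa [hu] using hlt)
    rw [← hd, ← neg_smul, mobiusDenom_smul_smul hu, norm_smul, hu] at hlt
    rw [norm_neg, norm_one, one_mul, sq_lt_sq₀ zero_le_one (by linarith)] at hlt
    linarith
  exact ⟨norm_eq_zero.1 (by linarith), by linarith⟩

end Mobius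

section Quadratic

variable [CompleteSpace E] {U : Set E} {ρ : E → ℝ} {φ : E → G}

/-- `φ` is affine for the metric `ρ⁻² ⟪·, ·⟫` on `U`: its Hessian for the Levi-Civita connection of
that metric vanishes. -/
structure IsScaleAffineOn (ρ : E → ℝ) (φ : E → G) (U : Set E) : Prop where
  differentiableAt : ∀ x ∈ U, DifferentiableAt ℝ φ x
  differentiableAt_fderiv : ∀ x ∈ U, DifferentiableAt ℝ (fderiv ℝ φ) x
  smul_fderiv_fderiv : ∀ x ∈ U, ∀ h k : E, ρ x • fderiv ℝ (fderiv ℝ φ) x h k =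
    -fderiv ℝ φ x (conformalChristoffel h k (∇ ρ x))

theorem isScaleAffineOn_const (ρ : E → ℝ) (c : G) (U : Set E) :
    IsScaleAffineOn ρ (fun _ => c) U where
  differentiableAt _ _ := differentiableAt_const c
  differentiableAt_fderiv _ _ := by simp
  smul_fderiv_fderiv _ _ _ _ := by simp

/-- The Schouten tensor of the metric `ρ⁻² ⟪·, ·⟫` vanishes on `U`. In dimension greater than two
this says that the metric is flat. -/
structure IsFlatScaleOn (ρ : E → ℝ) (U : Set E) : Prop where
  isOpen : IsOpen U
  pos : ∀ x ∈ U, 0 < ρ x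
  differentiableAt : ∀ x ∈ U, DifferentiableAt ℝ ρ x
  hasFDerivAt_gradient : ∀ x ∈ U,
    HasFDerivAt (∇ ρ) ((‖∇ ρ x‖ ^ 2 / (2 * ρ x)) • ContinuousLinearMap.id ℝ E) x

namespace IsFlatScaleOn

theorem hasFDerivAt_half_norm_sq_div (hρ : IsFlatScaleOn ρ U) {x : E} (hx : x ∈ U) :
    HasFDerivAt (fun y => ‖∇ ρ y‖ ^ 2 / (2 * ρ y)) (0 : E →L[ℝ] ℝ) x := by
  have hpos := (hρ.pos x hx).ne'
  simp only [div_eq_mul_inv]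
  have hinv := (hasDerivAt_inv (mul_ne_zero two_ne_zero hpos)).comp_hasFDerivAt x
    ((hρ.differentiableAt x hx).hasFDerivAt.const_mul 2)
  refine ((hρ.hasFDerivAt_gradient x hx).norm_sq.fun_mul hinv).congr_fderiv ?_
  ext h
  simp only [comp_apply, add_apply, smul_apply, ContinuousLinearMap.comp_apply,
    ContinuousLinearMap.id_apply, coe_innerSL_apply, inner_smul_right, inner_gradient_left,
    smul_eq_mul, nsmul_eq_mul, Nat.cast_ofNat, zero_apply]
  field_simp
  ring

theorem hasFDerivAt_half_norm_sq_div_smul_add (hρ : IsFlatScaleOn ρ U) (hφ : IsScaleAffineOn ρ φ U)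
    {x : E} (hx : x ∈ U) :
    HasFDerivAt (fun y => (‖∇ ρ y‖ ^ 2 / (2 * ρ y)) • φ y + fderiv ℝ φ y (∇ ρ y))
      (0 : E →L[ℝ] G) x := by
  have hpos := (hρ.pos x hx).ne'
  refine (((hρ.hasFDerivAt_half_norm_sq_div hx).fun_smul
    (hφ.differentiableAt x hx).hasFDerivAt).add
    ((hφ.differentiableAt_fderiv x hx).hasFDerivAt.clm_apply
      (hρ.hasFDerivAt_gradient x hx))).congr_fderiv ?_
  ext h
  have hsecond : fderiv ℝ (fderiv ℝ φ) x h (∇ ρ x) =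
      -((‖∇ ρ x‖ ^ 2 / ρ x) • fderiv ℝ φ x h) := by
    refine smul_right_injective G hpos ?_
    simp only [hφ.smul_fderiv_fderiv x hx, conformalChristoffel_self_right, map_smul, smul_neg,
      smul_smul]
    field_simp
  simp only [add_apply, smul_apply, map_smul, ContinuousLinearMap.zero_smulRight,
    ContinuousLinearMap.comp_apply, ContinuousLinearMap.id_apply, ContinuousLinearMap.flip_apply,
    hsecond, zero_apply]
  module

theorem hasFDerivAt_smul_apply (hρ : IsFlatScaleOn ρ U) (hφ : IsScaleAffineOn ρ φ U)
    {x : E} (hx : x ∈ U) (k : E) :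
    HasFDerivAt (fun y => (ρ y • fderiv ℝ φ y + (fderiv ℝ ρ y).smulRight (φ y)) k)
      ((innerSL ℝ k).smulRight
        ((‖∇ ρ x‖ ^ 2 / (2 * ρ x)) • φ x + fderiv ℝ φ x (∇ ρ x))) x := by
  have hρk : HasFDerivAt (fun y => fderiv ℝ ρ y k)
      ((‖∇ ρ x‖ ^ 2 / (2 * ρ x)) • innerSL ℝ k) x := by
    refine (((innerSL ℝ k).hasFDerivAt.comp x (hρ.hasFDerivAt_gradient x hx)).congr_fderiv
      (by ext; simp)).congr_of_eventuallyEq (.of_forall fun y => ?_)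
    exact inner_gradient_left.symm.trans (real_inner_comm _ _)
  have hφk := (hφ.differentiableAt_fderiv x hx).hasFDerivAt.clm_apply (hasFDerivAt_const k x)
  refine (((hρ.differentiableAt x hx).hasFDerivAt.fun_smul hφk).add
    (hρk.fun_smul (hφ.differentiableAt x hx).hasFDerivAt)).congr_fderiv ?_
  ext h
  simp only [add_apply, smul_apply, zero_add, map_sub, map_add, map_smul, smul_eq_mul,
    ContinuousLinearMap.comp_zero, ContinuousLinearMap.flip_apply,
    ContinuousLinearMap.smulRight_apply, coe_innerSL_apply, hφ.smul_fderiv_fderiv x hx,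
    conformalChristoffel_apply, inner_gradient_left, real_inner_comm h k]
  module

theorem smul_eq_quadratic (hρ : IsFlatScaleOn ρ U) (hφ : IsScaleAffineOn ρ φ U)
    (hU : IsPreconnected U) {x₀ x : E} (hx₀ : x₀ ∈ U) (hx : x ∈ U) :
    ρ x • φ x = ρ x₀ • φ x₀ + (ρ x₀ • fderiv ℝ φ x₀ (x - x₀) + fderiv ℝ ρ x₀ (x - x₀) • φ x₀) +
      (2⁻¹ * ‖x - x₀‖ ^ 2) •
        ((‖∇ ρ x₀‖ ^ 2 / (2 * ρ x₀)) • φ x₀ + fderiv ℝ φ x₀ (∇ ρ x₀)) := by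
  have hconst {y : E} (hy : y ∈ U) : (‖∇ ρ y‖ ^ 2 / (2 * ρ y)) • φ y + fderiv ℝ φ y (∇ ρ y) =
      (‖∇ ρ x₀‖ ^ 2 / (2 * ρ x₀)) • φ x₀ + fderiv ℝ φ x₀ (∇ ρ x₀) :=
    hρ.isOpen.is_const_of_fderiv_eq_zero (𝕜 := ℝ) hU
      (fun z hz =>
        (hρ.hasFDerivAt_half_norm_sq_div_smul_add hφ hz).differentiableAt.differentiableWithinAt)
      (fun z hz => (hρ.hasFDerivAt_half_norm_sq_div_smul_add hφ hz).fderiv) hy hx₀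
  refine eq_add_half_norm_sq_smul hρ.isOpen hU
    (fun y hy => (hρ.differentiableAt y hy).hasFDerivAt.smul (hφ.differentiableAt y hy).hasFDerivAt)
    (fun y hy k => ?_) hx₀ hx
  rw [← hconst hy]
  exact hρ.hasFDerivAt_smul_apply hφ hy k

theorem eq_add_half_norm_sq_mul (hρ : IsFlatScaleOn ρ U) (hU : IsPreconnected U)
    {x₀ x : E} (hx₀ : x₀ ∈ U) (hx : x ∈ U) :
    ρ x = ρ x₀ + fderiv ℝ ρ x₀ (x - x₀) +
      2⁻¹ * ‖x - x₀‖ ^ 2 * (‖∇ ρ x₀‖ ^ 2 / (2 * ρ x₀)) := by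
  simpa using hρ.smul_eq_quadratic (isScaleAffineOn_const ρ (1 : ℝ) U) hU hx₀ hx

theorem eq_mul_mobiusDenom (hρ : IsFlatScaleOn ρ U) (hU : IsPreconnected U)
    {x₀ x : E} (hx₀ : x₀ ∈ U) (hx : x ∈ U) :
    ρ x = ρ x₀ * mobiusDenom (-(2 * ρ x₀)⁻¹ • ∇ ρ x₀) (x - x₀) := by
  have hρ₀ := hρ.pos x₀ hx₀
  rw [hρ.eq_add_half_norm_sq_mul hU hx₀ hx, mobiusDenom, real_inner_smul_left,
    inner_gradient_left, norm_smul, mul_pow, Real.norm_eq_abs, sq_abs]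
  field_simp
  ring

theorem eq_add_fderiv_mobius (hρ : IsFlatScaleOn ρ U) (hφ : IsScaleAffineOn ρ φ U)
    (hU : IsPreconnected U) {x₀ x : E} (hx₀ : x₀ ∈ U) (hx : x ∈ U) :
    φ x = φ x₀ + fderiv ℝ φ x₀ (mobius (-(2 * ρ x₀)⁻¹ • ∇ ρ x₀) (x - x₀)) := by
  have hρ₀ := (hρ.pos x₀ hx₀).ne'
  have hρx := (hρ.pos x hx).ne'
  have hscale := hρ.eq_mul_mobiusDenom hU hx₀ hx
  have smul_mobius : ρ x • mobius (-(2 * ρ x₀)⁻¹ • ∇ ρ x₀) (x - x₀) =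
      ρ x₀ • (x - x₀) + (2⁻¹ * ‖x - x₀‖ ^ 2) • ∇ ρ x₀ := by
    rw [mobius, smul_smul, ← div_eq_mul_inv,
      (div_eq_iff (right_ne_zero_of_mul (hscale ▸ hρx))).2 hscale]
    match_scalars <;> field_simp
  refine smul_right_injective G hρx ?_
  simp only [smul_add, ← map_smul, smul_mobius]
  rw [hρ.smul_eq_quadratic hφ hU hx₀ hx, hρ.eq_add_half_norm_sq_mul hU hx₀ hx, map_add,
    map_smul, map_smul]
  module

end IsFlatScaleOn

end Quadratic

/-- `f` is a conformal map of class `C³` on the open set `U`, with surjective derivatives, and its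
derivative at `x` multiplies lengths by `(ρ x)⁻¹`. The reciprocal of the scale is used because it is
the function that turns out to be a quadratic polynomial. -/
structure HasConformalScaleOn (f : E → F) (ρ : E → ℝ) (U : Set E) : Prop where
  isOpen : IsOpen U
  contDiffOn : ContDiffOn ℝ 3 f U
  surjective : ∀ x ∈ U, Surjective (fderiv ℝ f x)
  scale_contDiffOn : ContDiffOn ℝ 2 ρ U
  scale_pos : ∀ x ∈ U, 0 < ρ x
  sq_scale_mul_inner : ∀ x ∈ U, ∀ h k : E,
    ρ x ^ 2 * ⟪fderiv ℝ f x h, fderiv ℝ f x k⟫_ℝ = ⟪h, k⟫_ℝ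

theorem exists_hasConformalScaleOn [Nontrivial E] {f : E → F} {U : Set E} (hU : IsOpen U)
    (hf : ContDiffOn ℝ 3 f U) (hconf : ∀ x ∈ U, ConformalAt f x)
    (hsurj : ∀ x ∈ U, Surjective (fderiv ℝ f x)) :
    ∃ ρ : E → ℝ, HasConformalScaleOn f ρ U := by
  obtain ⟨e, he⟩ := exists_norm_eq E zero_le_one
  have norm_sq_pos {x : E} (hx : x ∈ U) : 0 < ‖fderiv ℝ f x e‖ ^ 2 ∧
      ∀ h k, ⟪fderiv ℝ f x h, fderiv ℝ f x k⟫_ℝ = ‖fderiv ℝ f x e‖ ^ 2 * ⟪h, k⟫_ℝ := by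
    obtain ⟨c, hc, hinner⟩ := conformalAt_iff'.1 (hconf x hx)
    have hce : ‖fderiv ℝ f x e‖ ^ 2 = c := by
      rw [← real_inner_self_eq_norm_sq, hinner, real_inner_self_eq_norm_sq, he]; ring
    exact hce ▸ ⟨hc, hinner⟩
  have norm_ne {x : E} (hx : x ∈ U) : ‖fderiv ℝ f x e‖ ≠ 0 :=
    (pow_ne_zero_iff two_ne_zero).1 (norm_sq_pos hx).1.ne'
  refine ⟨fun x => ‖fderiv ℝ f x e‖⁻¹, hU, hf, hsurj, ?_, fun x hx => ?_, fun x hx h k => ?_⟩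
  · exact (((hf.fderiv_of_isOpen hU (by norm_num)).clm_apply contDiffOn_const).norm ℝ
      fun x hx => norm_ne_zero_iff.1 (norm_ne hx)).inv fun x hx => norm_ne hx
  · have := norm_ne hx
    positivity
  · have := norm_ne hx
    rw [(norm_sq_pos hx).2]
    field_simp

namespace HasConformalScaleOn

variable {f : E → F} {ρ : E → ℝ} {U : Set E} {x : E}

theorem contDiffAt (H : HasConformalScaleOn f ρ U) (hx : x ∈ U) : ContDiffAt ℝ 3 f x :=
  H.contDiffOn.contDiffAt (H.isOpen.mem_nhds hx)

theorem contDiffAt_fderiv (H : HasConformalScaleOn f ρ U) (hx : x ∈ U) :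
    ContDiffAt ℝ 2 (fderiv ℝ f) x :=
  (H.contDiffAt hx).fderiv_right (by norm_num)

theorem differentiableAt_scale (H : HasConformalScaleOn f ρ U) (hx : x ∈ U) :
    DifferentiableAt ℝ ρ x :=
  (H.scale_contDiffOn.contDiffAt (H.isOpen.mem_nhds hx)).differentiableAt (by norm_num)

theorem injective_fderiv (H : HasConformalScaleOn f ρ U) (hx : x ∈ U) :
    Injective (fderiv ℝ f x) := by
  refine (injective_iff_map_eq_zero _).2 fun h hh => ?_
  rw [← inner_self_eq_zero (𝕜 := ℝ), ← H.sq_scale_mul_inner x hx, hh, inner_zero_left, mul_zero]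

theorem scale_mul_norm_fderiv (H : HasConformalScaleOn f ρ U) (hx : x ∈ U) (h : E) :
    ρ x * ‖fderiv ℝ f x h‖ = ‖h‖ := by
  rw [← sq_eq_sq₀ (mul_nonneg (H.scale_pos x hx).le (norm_nonneg _)) (norm_nonneg _), mul_pow,
    ← real_inner_self_eq_norm_sq, ← real_inner_self_eq_norm_sq, H.sq_scale_mul_inner x hx]

theorem cube_scale_mul_inner_fderiv_fderiv (H : HasConformalScaleOn f ρ U) (hx : x ∈ U)
    (l h k : E) :
    ρ x ^ 3 * (⟪fderiv ℝ (fderiv ℝ f) x l h, fderiv ℝ f x k⟫_ℝ +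
      ⟪fderiv ℝ f x h, fderiv ℝ (fderiv ℝ f) x l k⟫_ℝ) = -(2 * fderiv ℝ ρ x l * ⟪h, k⟫_ℝ) := by
  have hf' (h : E) :
      HasFDerivAt (fun y => fderiv ℝ f y h) ((fderiv ℝ (fderiv ℝ f) x).flip h) x := by
    simpa using ((H.contDiffAt_fderiv hx).differentiableAt (by norm_num)).hasFDerivAt.clm_apply
      (hasFDerivAt_const h x)
  have hprod := ((H.differentiableAt_scale hx).hasFDerivAt.pow 2).fun_mul ((hf' h).inner ℝ (hf' k))
  have hconst : HasFDerivAt (fun y => ρ y ^ 2 * ⟪fderiv ℝ f y h, fderiv ℝ f y k⟫_ℝ)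
      (0 : E →L[ℝ] ℝ) x :=
    (hasFDerivAt_const ⟪h, k⟫_ℝ x).congr_of_eventuallyEq <|
      Filter.eventually_of_mem (H.isOpen.mem_nhds hx) fun y hy => H.sq_scale_mul_inner y hy h k
  have hderiv := DFunLike.congr_fun (hprod.unique hconst) l
  simp only [Nat.add_one_sub_one, pow_one, nsmul_eq_mul, Nat.cast_ofNat, add_apply, smul_apply,
    smul_eq_mul, zero_apply, ContinuousLinearMap.comp_apply, ContinuousLinearMap.prod_apply,
    ContinuousLinearMap.flip_apply, fderivInnerCLM_apply] at hderiv
  rw [← H.sq_scale_mul_inner x hx]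
  linear_combination ρ x * hderiv

variable [CompleteSpace E]

theorem isScaleAffineOn (H : HasConformalScaleOn f ρ U) : IsScaleAffineOn ρ f U where
  differentiableAt x hx := (H.contDiffAt hx).differentiableAt (by norm_num)
  differentiableAt_fderiv x hx := (H.contDiffAt_fderiv hx).differentiableAt (by norm_num)
  smul_fderiv_fderiv x hx h k := by
    have hsymm := ((H.contDiffAt hx).isSymmSndFDerivAt (by simp; norm_num)).eq
    refine ext_inner_right ℝ fun w => ?_
    obtain ⟨l, rfl⟩ := H.surjective x hx w
    have hh := H.cube_scale_mul_inner_fderiv_fderiv hx h k l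
    have hk := H.cube_scale_mul_inner_fderiv_fderiv hx k l h
    have hl := H.cube_scale_mul_inner_fderiv_fderiv hx l h k
    rw [hsymm k h] at hk
    rw [hsymm l h, hsymm l k] at hl
    refine mul_left_cancel₀ (pow_pos (H.scale_pos x hx) 2).ne' ?_
    rw [inner_neg_left, mul_neg, H.sq_scale_mul_inner x hx, conformalChristoffel_apply,
      real_inner_smul_left]
    simp only [inner_add_left, inner_sub_left, real_inner_smul_left, inner_gradient_left]
    simp only [real_inner_comm] at hh hk hl ⊢
    -- the combination of Koszul's formula for the Levi-Civita connection
    linear_combination (hh + hk - hl) / 2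

theorem differentiableAt_gradient_scale (H : HasConformalScaleOn f ρ U) (hx : x ∈ U) :
    DifferentiableAt ℝ (∇ ρ) x :=
  (InnerProductSpace.toDual ℝ E).symm.toContinuousLinearEquiv.differentiableAt.comp x
    (((H.scale_contDiffOn.contDiffAt (H.isOpen.mem_nhds hx)).fderiv_right (m := 1)
      (by norm_num)).differentiableAt (by norm_num))

theorem sq_scale_smul_third_fderiv (H : HasConformalScaleOn f ρ U) (hx : x ∈ U) (l h k : E) :
    ρ x ^ 2 • fderiv ℝ (fderiv ℝ (fderiv ℝ f)) x l h k =
      fderiv ℝ f x (⟪∇ ρ x, l⟫_ℝ • conformalChristoffel h k (∇ ρ x) +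
        conformalChristoffel l (conformalChristoffel h k (∇ ρ x)) (∇ ρ x) -
        ρ x • conformalChristoffel h k (fderiv ℝ (∇ ρ) x l)) := by
  have hf'' := (H.isScaleAffineOn.differentiableAt_fderiv x hx).hasFDerivAt
  have hf''' := ((((H.contDiffAt_fderiv hx).fderiv_right (m := 1) (by norm_num)).differentiableAt
    (by norm_num)).hasFDerivAt.clm_apply (hasFDerivAt_const h x)).clm_apply (hasFDerivAt_const k x)
  have hleft := (H.differentiableAt_scale hx).hasFDerivAt.fun_smul hf'''
  have hright := (hf''.clm_apply ((conformalChristoffel h k).hasFDerivAt.comp x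
    (H.differentiableAt_gradient_scale hx).hasFDerivAt)).neg
  have heq := hleft.unique <| hright.congr_of_eventuallyEq <|
    Filter.eventually_of_mem (H.isOpen.mem_nhds hx) fun y hy =>
      H.isScaleAffineOn.smul_fderiv_fderiv y hy h k
  have heql := DFunLike.congr_fun heq l
  have hhk := H.isScaleAffineOn.smul_fderiv_fderiv x hx h k
  have hlΓ := H.isScaleAffineOn.smul_fderiv_fderiv x hx l (conformalChristoffel h k (∇ ρ x))
  simp only [add_apply, neg_apply, smul_apply, zero_add, ContinuousLinearMap.comp_zero, comp_apply,
    ContinuousLinearMap.comp_apply, ContinuousLinearMap.flip_apply,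
    ContinuousLinearMap.smulRight_apply] at heql
  simp only [map_sub, map_add, map_smul, inner_gradient_left]
  linear_combination (norm := module) ρ x • heql - fderiv ℝ ρ x l • hhk - hlΓ

theorem isFlatScaleOn (H : HasConformalScaleOn f ρ U) (hE : 2 < Module.rank ℝ E) :
    IsFlatScaleOn ρ U where
  isOpen := H.isOpen
  pos := H.scale_pos
  differentiableAt x hx := H.differentiableAt_scale hx
  hasFDerivAt_gradient x hx := by
    have hρ := H.scale_pos x hx
    have hzero := eq_zero_of_conformalChristoffel_symm hE
      (e := (ρ x • fderiv ℝ (∇ ρ) x - (2⁻¹ * ‖∇ ρ x‖ ^ 2) • .id ℝ E : E →L[ℝ] E)) fun l h k => by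
      have hsymm := ((H.contDiffAt_fderiv hx).isSymmSndFDerivAt (by simp)).eq l h
      have hthird := H.injective_fderiv hx <| (H.sq_scale_smul_third_fderiv hx l h k).symm.trans <|
        hsymm ▸ H.sq_scale_smul_third_fderiv hx h l k
      have hcurv := conformalChristoffel_curvature l h k (∇ ρ x)
      simp only [ContinuousLinearMap.coe_coe, sub_apply, smul_apply,
        ContinuousLinearMap.id_apply, map_sub, map_smul]
      linear_combination (norm := module) hcurv - hthird
    refine (H.differentiableAt_gradient_scale hx).hasFDerivAt.congr_fderiv ?_
    ext l
    have hl : ρ x • fderiv ℝ (∇ ρ) x l = (2⁻¹ * ‖∇ ρ x‖ ^ 2) • l :=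
      sub_eq_zero.1 (LinearMap.congr_fun hzero l)
    refine smul_right_injective E hρ.ne' (hl.trans ?_)
    simp only [smul_apply, ContinuousLinearMap.id_apply, smul_smul]
    field_simp

theorem exists_eq_add_fderiv_mobius (H : HasConformalScaleOn f ρ U) (hE : 2 < Module.rank ℝ E)
    (hU : IsPreconnected U) {x₀ : E} (hx₀ : x₀ ∈ U) :
    ∃ d : E, ∀ x ∈ U, 0 < mobiusDenom d (x - x₀) ∧
      f x = f x₀ + fderiv ℝ f x₀ (mobius d (x - x₀)) := by
  have hflat := H.isFlatScaleOn hE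
  exact ⟨-(2 * ρ x₀)⁻¹ • ∇ ρ x₀, fun x hx =>
    ⟨pos_of_mul_pos_right (hflat.eq_mul_mobiusDenom hU hx₀ hx ▸ H.scale_pos x hx)
      (H.scale_pos x₀ hx₀).le, hflat.eq_add_fderiv_mobius H.isScaleAffineOn hU hx₀ hx⟩⟩

end HasConformalScaleOn

theorem stmt_15_general [CompleteSpace E] (hE : 2 < Module.rank ℝ E) {f : E → F}
    (hf : ContDiffOn ℝ 3 f (ball 0 1)) (hconf : ∀ x ∈ ball (0 : E) 1, ConformalAt f x)
    (hsurj : ∀ x ∈ ball (0 : E) 1, Surjective (fderiv ℝ f x))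
    (hmaps : MapsTo f (ball 0 1) (ball 0 1)) (honto : SurjOn f (ball 0 1) (ball 0 1))
    (hf0 : f 0 = 0) :
    (∀ h, ‖fderiv ℝ f 0 h‖ = ‖h‖) ∧ EqOn f (fderiv ℝ f 0) (ball 0 1) := by
  have : Nontrivial E := rank_pos_iff_nontrivial.1 (zero_le_two.trans_lt hE)
  have h0 : (0 : E) ∈ ball 0 1 := mem_ball_self one_pos
  obtain ⟨ρ, H⟩ := exists_hasConformalScaleOn isOpen_ball hf hconf hsurj
  obtain ⟨d, hd⟩ := H.exists_eq_add_fderiv_mobius hE (convex_ball 0 1).isPreconnected h0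
  simp only [hf0, sub_zero, zero_add] at hd
  have hρ := H.scale_pos 0 h0
  have norm_fderiv (h : E) : ‖fderiv ℝ f 0 h‖ = (ρ 0)⁻¹ * ‖h‖ := by
    rw [← H.scale_mul_norm_fderiv h0 h, inv_mul_cancel_left₀ hρ.ne']
  obtain ⟨rfl, hρ1⟩ : d = 0 ∧ (ρ 0)⁻¹ = 1 := by
    refine eq_zero_and_eq_one_of_lt_mobiusDenom (inv_pos.2 hρ) (fun x hx => ?_) fun w hw => ?_
    · obtain ⟨hpos, hfx⟩ := hd x (mem_ball_zero_iff.2 hx)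
      have hlt := mem_ball_zero_iff.1 (hmaps (mem_ball_zero_iff.2 hx))
      rw [hfx, norm_fderiv, ← sq_lt_one_iff₀ (by positivity), mul_pow, norm_mobius_sq hpos.ne',
        mul_div_assoc', div_lt_one hpos, ← mul_pow] at hlt
      exact hlt
    · obtain ⟨x, hx, hfx⟩ := honto (mem_ball_zero_iff.2 ((norm_fderiv w).trans_lt hw))
      obtain ⟨hpos, hfx'⟩ := hd x hx
      obtain rfl := H.injective_fderiv h0 (hfx'.symm.trans hfx)
      rw [mobiusDenom_neg_mobius hpos.ne', norm_mobius_sq hpos.ne', div_eq_mul_inv]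
      refine mul_lt_of_lt_one_left (inv_pos.2 hpos) ?_
      exact (sq_lt_one_iff₀ (norm_nonneg x)).2 (mem_ball_zero_iff.1 hx)
  exact ⟨fun h => by rw [norm_fderiv, hρ1, one_mul], fun x hx => by
    rw [(hd x hx).2, mobius_zero_left]⟩

end Liouville

namespace Pseudoconformal

variable {f : ℍ[ℝ] → ℍ[ℝ]} {ξ : ℍ[ℝ]}

theorem exists_fderiv_eq (hf : Pseudoconformal f ξ) :
    ∃ a b : ℍ[ℝ], a ≠ 0 ∧ b ≠ 0 ∧ DifferentiableAt ℝ f ξ ∧ ∀ h, fderiv ℝ f ξ h = a * h * b := by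
  obtain ⟨A, a, b, ha, hb, hA, hAab⟩ := hf
  exact ⟨a, b, ha, hb, hA.differentiableAt, fun h => hA.fderiv.symm ▸ hAab h⟩

theorem surjective_fderiv (hf : Pseudoconformal f ξ) : Function.Surjective (fderiv ℝ f ξ) := by
  obtain ⟨a, b, ha, hb, -, hfab⟩ := hf.exists_fderiv_eq
  exact fun w => ⟨a⁻¹ * w * b⁻¹, by simp [hfab, mul_assoc, ha, hb]⟩

theorem conformalAt (hf : Pseudoconformal f ξ) : ConformalAt f ξ := by
  obtain ⟨a, b, ha, hb, hdiff, hfab⟩ := hf.exists_fderiv_eq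
  have hc : ‖a‖ * ‖b‖ ≠ 0 := mul_ne_zero (norm_ne_zero_iff.2 ha) (norm_ne_zero_iff.2 hb)
  have norm_fderiv (h : ℍ[ℝ]) : ‖fderiv ℝ f ξ h‖ = ‖a‖ * ‖b‖ * ‖h‖ := by
    rw [hfab, norm_mul, norm_mul]; ring
  let iso : ℍ[ℝ] →ₗᵢ[ℝ] ℍ[ℝ] :=
    { ((‖a‖ * ‖b‖)⁻¹ • fderiv ℝ f ξ : ℍ[ℝ] →L[ℝ] ℍ[ℝ]).toLinearMap with
      norm_map' := fun h => by
        refine (norm_smul (‖a‖ * ‖b‖)⁻¹ (fderiv ℝ f ξ h)).trans ?_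
        rw [norm_fderiv, norm_inv, norm_mul, norm_norm, norm_norm, inv_mul_cancel_left₀ hc] }
  refine ⟨fderiv ℝ f ξ, hdiff.hasFDerivAt, ‖a‖ * ‖b‖, hc, iso, ?_⟩
  ext1 h
  exact (smul_inv_smul₀ hc _).symm

theorem exists_norm_eq_one_fderiv_eq (hf : Pseudoconformal f ξ)
    (hnorm : ∀ h, ‖fderiv ℝ f ξ h‖ = ‖h‖) :
    ∃ u v : ℍ[ℝ], ‖u‖ = 1 ∧ ‖v‖ = 1 ∧ ∀ h, fderiv ℝ f ξ h = u * h * v := by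
  obtain ⟨a, b, ha, -, -, hfab⟩ := hf.exists_fderiv_eq
  have hab : ‖a‖ * ‖b‖ = 1 := by simpa [hfab] using hnorm 1
  refine ⟨‖a‖⁻¹ • a, ‖a‖ • b, norm_smul_inv_norm ha, by simpa [norm_smul] using hab, fun h => ?_⟩
  rw [hfab, smul_mul_assoc, smul_mul_smul_comm, inv_mul_cancel₀ (norm_ne_zero_iff.2 ha), one_smul]

end Pseudoconformal

/-- The stabilizer-of-the-origin step in the paper's Theorem 3.37: every
real-analytic pseudoconformal bijection of the open unit ball of `ℍ` fixing `0`
has the form `z ↦ u z v` with unit quaternions `u`, `v`. -/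
theorem stmt_15 (g : ℍ[ℝ] → ℍ[ℝ])
    (hbij : Set.BijOn g (Metric.ball (0 : ℍ[ℝ]) 1) (Metric.ball (0 : ℍ[ℝ]) 1))
    (han : AnalyticOnNhd ℝ g (Metric.ball (0 : ℍ[ℝ]) 1))
    (hpc : ∀ ξ ∈ Metric.ball (0 : ℍ[ℝ]) 1, Pseudoconformal g ξ)
    (h0 : g 0 = 0) :
    ∃ u v : ℍ[ℝ], ‖u‖ = 1 ∧ ‖v‖ = 1 ∧
      ∀ z ∈ Metric.ball (0 : ℍ[ℝ]) 1, g z = u * z * v := by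
  have hrank : 2 < Module.rank ℝ ℍ[ℝ] := by
    rw [Quaternion.rank_eq_four]
    norm_num
  obtain ⟨hnorm, heq⟩ := stmt_15_general hrank (han.contDiffOn Metric.isOpen_ball.uniqueDiffOn)
    (fun ξ hξ => (hpc ξ hξ).conformalAt) (fun ξ hξ => (hpc ξ hξ).surjective_fderiv)
    hbij.mapsTo hbij.surjOn h0
  obtain ⟨u, v, hu, hv, huv⟩ :=
    (hpc 0 (Metric.mem_ball_self one_pos)).exists_norm_eq_one_fderiv_eq hnorm
  exact ⟨u, v, hu, hv, fun z hz => (heq hz).trans (huv z)⟩
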